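/- Let γ ∈ (0,1], R ∈ (0,1), c₂ > 0, and μ_s > 0. Then there exist a constant c̃' > 0 and n₀ such that for every integer n ≥ n₀ with nR ∈ ℕ and n(1−R) a positive integer, the following holds. Set ε* = 1 − R − c₂ n^{−γ}, let P_e : [0,1] → [0,1] be any nondecreasing function with P_e(ε) ≤ 1 − (1−ε)^n for all ε and P_e(ε*) ≤ n^{−9}, and define T_K = 1/(nR) + (1/(μ_s n R)) ∫_0^1 (P_e(ε)/ε) dε and T_MDS = 1/(nR) + (1/(μ_s n R)) Σ_{i=n(1−R)+1}^{n} 1/i. Then n·T_K − n·T_MDS ≤ c̃' · n^{−γ}. -/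

import Mathlib

open MeasureTheory

lemma aux_sum (j n : ℕ) (h : j ≤ n) :
    Real.log (n+1) - Real.log (j+1) ≤ ∑ i ∈ Finset.Ioc j n, (1:ℝ) / i := by
  induction n, h using Nat.le_induction with
  | base => simp
  | succ m hm ih =>
    rw [Finset.sum_Ioc_succ_top (by omega)]
    have h1 : Real.log (((m:ℝ)+1+1)/((m:ℝ)+1)) ≤ ((m:ℝ)+1+1)/((m:ℝ)+1) - 1 :=
      Real.log_le_sub_one_of_pos (by positivity)
    rw [Real.log_div (by positivity) (by positivity)] at h1
    have h2 : ((m:ℝ)+1+1)/((m:ℝ)+1) - 1 = 1/((m:ℝ)+1) := by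
      field_simp
      ring
    push_cast
    linarith

lemma aux_int (n : ℕ) (hn : 1 ≤ n) (εs : ℝ) (h0 : 0 < εs) (h1 : εs ≤ 1) (Pe : ℝ → ℝ)
    (hm : MonotoneOn Pe (Set.Icc (0:ℝ) 1))
    (hb : ∀ ε ∈ Set.Icc (0:ℝ) 1, Pe ε ∈ Set.Icc (0:ℝ) 1)
    (hu : ∀ ε ∈ Set.Icc (0:ℝ) 1, Pe ε ≤ 1 - (1 - ε) ^ n)
    (h9 : Pe εs ≤ (n:ℝ) ^ (-(9:ℝ))) :
    ∫ ε in Set.Ioc (0:ℝ) 1, Pe ε / ε ≤ 2 / n - Real.log εs := by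
  have hn1 : (1:ℝ) ≤ n := by exact_mod_cast hn
  have hn0 : (0:ℝ) < n := by linarith
  have h9' : Pe εs ≤ 1 / (n:ℝ)^3 := by
    refine h9.trans ?_
    rw [one_div, ← Real.rpow_natCast, ← Real.rpow_neg hn0.le]
    exact Real.rpow_le_rpow_of_exponent_le hn1 (by norm_num)
  set a : ℝ := 1 / (n:ℝ)^2 with ha
  have ha0 : 0 < a := by positivity
  have ha1 : a ≤ 1 := by
    rw [ha, div_le_one (by positivity)]
    exact one_le_pow₀ hn1
  have hI1 : IntegrableOn (fun _ : ℝ => (n:ℝ)) (Set.Ioc 0 a) := by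
    simp [integrableOn_const_iff]
  have hI2 : IntegrableOn (fun ε : ℝ => 1/ε) (Set.Ioc εs 1) := by
    have : IntervalIntegrable (fun ε : ℝ => 1/ε) volume εs 1 := by
      apply intervalIntegral.intervalIntegrable_one_div
      · intro x hx
        rw [Set.uIcc_of_le h1] at hx
        exact (lt_of_lt_of_le h0 hx.1).ne'
      · fun_prop
    exact (intervalIntegrable_iff_integrableOn_Ioc_of_le h1).1 this
  have hg1 : Integrable (Set.indicator (Set.Ioc 0 a) (fun _ : ℝ => (n:ℝ)))
      (volume.restrict (Set.Ioc (0:ℝ) 1)) :=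
    (hI1.integrable_indicator measurableSet_Ioc).mono_measure Measure.restrict_le_self
  have hg2 : Integrable (Set.indicator (Set.Ioc εs 1) (fun ε : ℝ => 1/ε))
      (volume.restrict (Set.Ioc (0:ℝ) 1)) :=
    (hI2.integrable_indicator measurableSet_Ioc).mono_measure Measure.restrict_le_self
  have hc : Integrable (fun _ : ℝ => 1/(n:ℝ)) (volume.restrict (Set.Ioc (0:ℝ) 1)) :=
    integrable_const _
  have key : ∫ ε in Set.Ioc (0:ℝ) 1, Pe ε / ε ≤ ∫ ε in Set.Ioc (0:ℝ) 1,
      (Set.indicator (Set.Ioc 0 a) (fun _ : ℝ => (n:ℝ)) ε + 1/(n:ℝ) +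
        Set.indicator (Set.Ioc εs 1) (fun ε : ℝ => 1/ε) ε) := by
    apply integral_mono_of_nonneg
    · filter_upwards [ae_restrict_mem measurableSet_Ioc] with ε hε
      exact div_nonneg (hb ε ⟨hε.1.le, hε.2⟩).1 hε.1.le
    · exact (hg1.add hc).add hg2
    · filter_upwards [ae_restrict_mem measurableSet_Ioc] with ε hε
      have hε0 := hε.1
      have hmem : ε ∈ Set.Icc (0:ℝ) 1 := ⟨hε.1.le, hε.2⟩
      have p1 : 0 ≤ Set.indicator (Set.Ioc 0 a) (fun _ : ℝ => (n:ℝ)) ε :=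
        Set.indicator_nonneg (fun _ _ => hn0.le) _
      have p2 : 0 ≤ Set.indicator (Set.Ioc εs 1) (fun ε : ℝ => 1/ε) ε :=
        Set.indicator_nonneg (fun x hx => by
          have := h0.trans hx.1
          positivity) _
      have p3 : 0 ≤ 1/(n:ℝ) := by positivity
      rcases le_or_gt ε a with h | h
      · have : Pe ε / ε ≤ n := by
          rw [div_le_iff₀ hε0]
          have hB := one_add_mul_le_pow (a := -ε) (by linarith [hε.2]) n
          have := hu ε hmem
          rw [← sub_eq_add_neg] at hB
          linarith
        rw [Set.indicator_of_mem (show ε ∈ Set.Ioc 0 a from ⟨hε0, h⟩)]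
        linarith
      · rcases le_or_gt ε εs with h' | h'
        · have : Pe ε / ε ≤ 1/(n:ℝ) := by
            rw [div_le_iff₀ hε0]
            have q1 := hm hmem ⟨h0.le, h1⟩ h'
            have q2 : 1/(n:ℝ) * a ≤ 1/(n:ℝ) * ε := by gcongr
            have q3 : 1/(n:ℝ) * a = 1/(n:ℝ)^3 := by
              rw [ha]
              field_simp
            linarith
          linarith
        · have : Pe ε / ε ≤ 1/ε := by
            have := (hb ε hmem).2
            gcongr
          rw [Set.indicator_of_mem (show ε ∈ Set.Ioc εs 1 from ⟨h', hε.2⟩)]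
          linarith
  refine key.trans (le_of_eq ?_)
  have hg3 : Integrable (fun ε => Set.indicator (Set.Ioc 0 a) (fun _ : ℝ => (n:ℝ)) ε + 1/(n:ℝ))
      (volume.restrict (Set.Ioc (0:ℝ) 1)) := hg1.add hc
  rw [integral_add hg3 hg2, integral_add hg1 hc,
    setIntegral_indicator measurableSet_Ioc, setIntegral_indicator measurableSet_Ioc,
    Set.inter_eq_right.2 (Set.Ioc_subset_Ioc le_rfl ha1),
    Set.inter_eq_right.2 (Set.Ioc_subset_Ioc h0.le le_rfl),
    ← intervalIntegral.integral_of_le h1, integral_one_div_of_pos h0 one_pos,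
    Real.log_div one_ne_zero h0.ne']
  simp [ha0.le]
  rw [ha]
  field_simp
  ring

/-- **gap to optimum, Theorem 2 of the paper.** Let `γ ∈ (0,1]`,
`R ∈ (0,1)`, `c₂ > 0`, `μ_s > 0`. Then there are `c̃' > 0` and `n₀` such that for every
`n ≥ n₀` with `nR ∈ ℕ` and `n(1−R) = j` a positive integer, setting
`ε* = 1 − R − c₂ n^{−γ}`: for every admissible block error probability `P_e`, the
normalized gap between `T_K` (large-kernel polar code) and `T_MDS` is at most
`c̃' n^{−γ}`. -/
theorem gap_to_optimum_large_kernels (γ R c₂ μs : ℝ)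
    (hγ : γ ∈ Set.Ioc (0:ℝ) 1) (hR : R ∈ Set.Ioo (0:ℝ) 1)
    (hc₂ : 0 < c₂) (hμs : 0 < μs) :
    ∃ c' : ℝ, 0 < c' ∧ ∃ n₀ : ℕ, ∀ n : ℕ, n₀ ≤ n → (∃ k : ℕ, (k:ℝ) = (n:ℝ) * R) →
      ∀ j : ℕ, 0 < j → (j:ℝ) = (n:ℝ) * (1 - R) →
      ∀ εs : ℝ, εs = 1 - R - c₂ * (n:ℝ) ^ (-γ) →
      ∀ Pe : ℝ → ℝ, MonotoneOn Pe (Set.Icc (0:ℝ) 1) →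
        (∀ ε ∈ Set.Icc (0:ℝ) 1, Pe ε ∈ Set.Icc (0:ℝ) 1) →
        (∀ ε ∈ Set.Icc (0:ℝ) 1, Pe ε ≤ 1 - (1 - ε) ^ n) →
        Pe εs ≤ (n:ℝ) ^ (-(9:ℝ)) →
        (n:ℝ) * (1 / ((n:ℝ) * R) +
            (1 / (μs * (n:ℝ) * R)) * ∫ ε in Set.Ioc (0:ℝ) 1, Pe ε / ε) -
          (n:ℝ) * (1 / ((n:ℝ) * R) +
            (1 / (μs * (n:ℝ) * R)) * ∑ i ∈ Finset.Ioc j n, (1:ℝ) / i) ≤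
        c' * (n:ℝ) ^ (-γ) := by
  obtain ⟨hγ0, hγ1⟩ := hγ
  obtain ⟨hR0, hR1⟩ := hR
  have hR' : 0 < 1 - R := by linarith
  refine ⟨1/(μs*R) * (2 + 1/(1-R) + 2*c₂/(1-R)), by positivity, ?_⟩
  have ht : Filter.Tendsto (fun n : ℕ => c₂ * (n:ℝ)^(-γ)) Filter.atTop (nhds 0) := by
    have := ((tendsto_rpow_neg_atTop hγ0).comp tendsto_natCast_atTop_atTop).const_mul c₂
    simpa using this
  have he := ht.eventually (ge_mem_nhds (show 0 < (1-R)/2 by linarith))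
  obtain ⟨N, hN⟩ := Filter.eventually_atTop.1 he
  refine ⟨max N 1, ?_⟩
  intro n hn _ j hj hjn εs hεs Pe hm hb hu h9
  have hn1 : 1 ≤ n := (le_max_right _ _).trans hn
  have hsm := hN n ((le_max_left _ _).trans hn)
  have hn1' : (1:ℝ) ≤ n := by exact_mod_cast hn1
  have hn0 : (0:ℝ) < n := by linarith
  have hj0 : (0:ℝ) < j := by exact_mod_cast hj
  set x := (n:ℝ)^(-γ) with hx
  have hx0 : 0 < x := Real.rpow_pos_of_pos hn0 _
  have hcx : 0 < c₂ * x := by positivity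
  have hs0 : (1-R)/2 ≤ εs := by linarith
  have hsp : 0 < εs := by linarith
  have hA := aux_int n hn1 εs hsp (by linarith) Pe hm hb hu h9
  have hjle : j ≤ n := by
    have : (j:ℝ) ≤ n := by
      rw [hjn]
      nlinarith
    exact_mod_cast this
  have hB := aux_sum j n hjle
  have hxn : 1/(n:ℝ) ≤ x := by
    rw [hx, one_div, ← Real.rpow_neg_one]
    exact Real.rpow_le_rpow_of_exponent_le hn1' (by linarith)
  have hC : Real.log ((1-R)/εs) ≤ 2*c₂/(1-R)*x := by
    refine (Real.log_le_sub_one_of_pos (by positivity)).trans ?_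
    have e : (1-R)/εs - 1 = c₂*x/εs := by
      rw [eq_div_iff hsp.ne', sub_mul, div_mul_cancel₀ _ hsp.ne']
      linarith
    rw [e]
    calc c₂*x/εs ≤ c₂*x/((1-R)/2) := by gcongr
      _ = _ := by field_simp
  rw [Real.log_div hR'.ne' hsp.ne'] at hC
  have hD : Real.log ((j+1)/j) ≤ 1/(1-R)*x := by
    refine (Real.log_le_sub_one_of_pos (by positivity)).trans ?_
    have e : ((j:ℝ)+1)/j - 1 = 1/(1-R)*(1/n) := by
      rw [hjn]
      field_simp
      ring
    rw [e]
    gcongr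
  rw [Real.log_div (by positivity) hj0.ne'] at hD
  have hE : Real.log j = Real.log n + Real.log (1-R) := by
    rw [hjn, Real.log_mul hn0.ne' hR'.ne']
  have hF : Real.log n ≤ Real.log (n+1) := Real.log_le_log hn0 (by linarith)
  have h2n : 2/(n:ℝ) = 2*(1/n) := by ring
  set I := ∫ ε in Set.Ioc (0:ℝ) 1, Pe ε / ε
  set S := ∑ i ∈ Finset.Ioc j n, (1:ℝ) / i
  have e : (n:ℝ) * (1 / ((n:ℝ) * R) + (1 / (μs * (n:ℝ) * R)) * I) -
      (n:ℝ) * (1 / ((n:ℝ) * R) + (1 / (μs * (n:ℝ) * R)) * S) = 1/(μs*R) * (I - S) := by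
    field_simp
    ring
  rw [e, mul_assoc]
  apply mul_le_mul_of_nonneg_left _ (by positivity)
  linarith
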